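/- Let X be a compact metric space with metric d and α : X → X a homeomorphism, with E the closure of {α^n : n ∈ ℤ} in the space of self-maps of X with the product topology. Suppose the ℤ-action is almost distal, i.e., every forward proximal pair is forward asymptotic and every backward proximal pair is backward asymptotic. Then E is nearly simple: E has a unique minimal two-sided ideal, and every element of E having no compositional inverse in E belongs to that ideal. -/

import Mathlib

/-- The `n`-th power (`n : ℤ`) of a homeomorphism `α`, as a self-map. -/
def zIter {X : Type*} [TopologicalSpace X] (α : X ≃ₜ X) (n : ℤ) : X → X :=
  if 0 ≤ n then (⇑α)^[n.toNat] else (⇑α.symm)^[(-n).toNat]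

/-- A two-sided ideal of the subsemigroup `S` of self-maps of `X` (under composition). -/
def IsIdealIn {X : Type*} (S I : Set (X → X)) : Prop :=
  I.Nonempty ∧ I ⊆ S ∧ ∀ f ∈ S, ∀ g ∈ I, f ∘ g ∈ I ∧ g ∘ f ∈ I

/-!
Let `L` be the set of limits in `E` of the forward powers of `α`, and `L'` that of its backward
powers. Both are compact left ideals of `E`, and `E` is the union of `L ∪ L'` with the group of
powers of `α`; hence `L ∪ L'` is a two-sided ideal containing every non-invertible element.

Almost distality says that all elements of `L` identify the same pairs of points: a pair identified
by one of them is forward proximal, hence forward asymptotic, hence identified by all of them. Given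
`p, r ∈ L`, the compact semigroup `L ∘ p` contains an idempotent `u = q ∘ p` (Ellis). The points `x`
and `u x` are identified by `u`, hence by `r`, so `r = r ∘ u = (r ∘ q) ∘ p`. Thus `L` is a minimal
left ideal, and likewise `L'`, so every two-sided ideal contains both.
-/

open Filter Topology Set Uniformity

section Semigroup

variable {X : Type*} {S L K : Set (X → X)}

/-- A left ideal of the semigroup `S` of self-maps of `X` (under composition). -/
def IsLeftIdealIn (S L : Set (X → X)) : Prop :=
  L.Nonempty ∧ L ⊆ S ∧ ∀ f ∈ S, ∀ g ∈ L, f ∘ g ∈ L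

/-- All maps in `L` identify the same pairs of points, i.e. have the same kernel
`{(x, y) | p x = p y}`. -/
def HasCommonKernel (L : Set (X → X)) : Prop :=
  ∀ p ∈ L, ∀ q ∈ L, ∀ x y, p x = p y → q x = q y

/-- The semigroup `S` of self-maps is nearly simple: it has a unique minimal two-sided ideal, and
this ideal contains every element of `S` without a compositional inverse in `S`. -/
def IsNearlySimple (S : Set (X → X)) : Prop :=
  ∃ K : Set (X → X),
    IsIdealIn S K ∧
    (∀ I : Set (X → X), IsIdealIn S I → I ⊆ K → I = K) ∧
    (∀ I : Set (X → X), IsIdealIn S I →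
      (∀ J : Set (X → X), IsIdealIn S J → J ⊆ I → J = I) → I = K) ∧
    (∀ f ∈ S, (¬∃ g ∈ S, f ∘ g = id ∧ g ∘ f = id) → f ∈ K)

theorem isNearlySimple_of_least_ideal (hK : IsIdealIn S K) (hleast : ∀ I, IsIdealIn S I → K ⊆ I)
    (hinv : ∀ f ∈ S, f ∉ K → ∃ g ∈ S, f ∘ g = id ∧ g ∘ f = id) : IsNearlySimple S :=
  ⟨K, hK, fun I hI hIK => hIK.antisymm (hleast I hI),
    fun I hI hmin => (hmin K hK (hleast I hI)).symm,
    fun f hf hf_inv => by_contra fun hfK => hf_inv (hinv f hf hfK)⟩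

variable [TopologicalSpace X] [T2Space X]

theorem exists_idempotent_comp_of_isCompact (hne : S.Nonempty) (hS : IsCompact S)
    (hcomp : ∀ f ∈ S, ∀ g ∈ S, f ∘ g ∈ S) : ∃ u ∈ S, u ∘ u = u :=
  letI : Semigroup (X → X) := { mul := fun f g => f ∘ g, mul_assoc := fun _ _ _ => rfl }
  exists_idempotent_in_compact_subsemigroup Pi.continuous_precomp S hne hS hcomp

theorem HasCommonKernel.exists_eq_comp (hker : HasCommonKernel L) (hL : IsCompact L)
    (hcomp : ∀ f ∈ L, ∀ g ∈ L, f ∘ g ∈ L) {p r : X → X} (hp : p ∈ L) (hr : r ∈ L) :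
    ∃ g ∈ L, r = g ∘ p := by
  obtain ⟨_, ⟨q, hq, rfl⟩, hidem⟩ : ∃ u ∈ (· ∘ p) '' L, u ∘ u = u := by
    refine exists_idempotent_comp_of_isCompact ⟨_, p, hp, rfl⟩
      (hL.image (Pi.continuous_precomp p)) ?_
    rintro _ ⟨a, ha, rfl⟩ _ ⟨b, hb, rfl⟩
    exact ⟨a ∘ p ∘ b, hcomp a ha _ (hcomp p hp b hb), rfl⟩
  refine ⟨r ∘ q, hcomp r hr q hq, funext fun x => ?_⟩
  exact (hker (q ∘ p) (hcomp q hq p hp) r hr _ _ (congrFun hidem x)).symm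

theorem IsLeftIdealIn.subset_of_isIdealIn (hL : IsLeftIdealIn S L) (hc : IsCompact L)
    (hker : HasCommonKernel L) {I : Set (X → X)} (hI : IsIdealIn S I) : L ⊆ I := by
  obtain ⟨⟨p, hp⟩, hLS, hL_left⟩ := hL
  obtain ⟨⟨i, hi⟩, hIS, hI_comp⟩ := hI
  intro r hr
  obtain ⟨g, hg, rfl⟩ := hker.exists_eq_comp hc (fun f hf => hL_left f (hLS hf))
    (hL_left i (hIS hi) p hp) hr
  exact (hI_comp g (hLS hg) _ (hI_comp p (hLS hp) i hi).2).1

end Semigroup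

section Powers

variable {X : Type*} [TopologicalSpace X] (α : X ≃ₜ X)

theorem zIter_natCast (n : ℕ) : zIter α n = (⇑α)^[n] := by simp [zIter]

theorem zIter_eq_coe_zpow (n : ℤ) : zIter α n = ⇑(α ^ n) := by
  have coe_pow (β : X ≃ₜ X) (m : ℕ) : ⇑(β ^ m) = (⇑β)^[m] :=
    hom_coe_pow (fun γ : X ≃ₜ X => ⇑γ) rfl (fun _ _ => rfl) β m
  cases n with
  | ofNat m => exact (zIter_natCast α m).trans (coe_pow α m).symm
  | negSucc m =>
    rw [zpow_negSucc, ← inv_pow, coe_pow]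
    rfl

theorem zIter_add (m n : ℤ) : zIter α (m + n) = zIter α m ∘ zIter α n := by
  simp only [zIter_eq_coe_zpow, zpow_add]
  rfl

theorem zIter_comp_zIter_neg (n : ℤ) : zIter α n ∘ zIter α (-n) = id := by
  rw [← zIter_add, add_neg_cancel]
  rfl

theorem zIter_symm (n : ℤ) : zIter α.symm n = zIter α (-n) := by
  rw [zIter_eq_coe_zpow, zIter_eq_coe_zpow, zpow_neg, ← inv_zpow]
  rfl

theorem continuous_zIter (n : ℤ) : Continuous (zIter α n) := by
  rw [zIter_eq_coe_zpow]
  exact (α ^ n).continuous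

/-- The Ellis (enveloping) semigroup of the `ℤ`-action generated by `α`: the closure of the powers
of `α` in the topology of pointwise convergence. -/
def ellisSemigroup (α : X ≃ₜ X) : Set (X → X) :=
  closure {h : X → X | ∃ n : ℤ, h = zIter α n}

theorem zIter_mem_ellisSemigroup (n : ℤ) : zIter α n ∈ ellisSemigroup α :=
  subset_closure ⟨n, rfl⟩

theorem ellisSemigroup_symm : ellisSemigroup α.symm = ellisSemigroup α := by
  simp only [ellisSemigroup, zIter_symm]
  congr 1
  ext h
  exact (Equiv.neg ℤ).exists_congr_left.trans (by simp)

end Powers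

section LimitMaps

variable {X : Type*} [TopologicalSpace X]

/-- The pointwise limits, along subnets, of the forward iterates of `β`. Limits of the backward
iterates of a homeomorphism `α` form `limitMaps α.symm`. -/
def limitMaps (β : X → X) : Set (X → X) :=
  {f | MapClusterPt f atTop fun n : ℕ => β^[n]}

theorem isClosed_limitMaps (β : X → X) : IsClosed (limitMaps β) :=
  isClosed_setOfPred_clusterPt

theorem limitMaps_nonempty [CompactSpace X] (β : X → X) : (limitMaps β).Nonempty :=
  exists_clusterPt_of_compactSpace _

variable {α : X ≃ₜ X} {f g : X → X}

theorem mem_limitMaps_iff_zIter : f ∈ limitMaps α ↔ MapClusterPt f atTop (zIter α) := by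
  rw [← Nat.map_cast_int_atTop, ← mapClusterPt_comp]
  simp only [Function.comp_def, zIter_natCast]
  rfl

theorem mem_limitMaps_symm_iff_zIter :
    f ∈ limitMaps α.symm ↔ MapClusterPt f atBot (zIter α) := by
  have hneg : zIter α.symm = zIter α ∘ Neg.neg := funext (zIter_symm α)
  rw [mem_limitMaps_iff_zIter, hneg, mapClusterPt_comp, map_neg_atTop]

theorem zIter_comp_mem_limitMaps (k : ℤ) (hf : f ∈ limitMaps α) :
    zIter α k ∘ f ∈ limitMaps α := by
  rw [mem_limitMaps_iff_zIter] at hf ⊢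
  have hcont : Continuous fun h : X → X => zIter α k ∘ h :=
    Pi.continuous_postcomp (continuous_zIter α k)
  have hshift : (fun h => zIter α k ∘ h) ∘ zIter α = zIter α ∘ (k + ·) :=
    funext fun n => (zIter_add α k n).symm
  have hcluster := hf.continuousAt_comp hcont.continuousAt
  rw [hshift] at hcluster
  exact hcluster.of_comp (tendsto_atTop_add_const_left _ k tendsto_id)

theorem comp_zIter_mem_limitMaps (k : ℤ) (hf : f ∈ limitMaps α) :
    f ∘ zIter α k ∈ limitMaps α := by
  rw [mem_limitMaps_iff_zIter] at hf ⊢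
  have hshift : (fun h => h ∘ zIter α k) ∘ zIter α = zIter α ∘ (· + k) :=
    funext fun n => (zIter_add α n k).symm
  have hcluster := hf.continuousAt_comp (Pi.continuous_precomp (zIter α k)).continuousAt
  rw [hshift] at hcluster
  exact hcluster.of_comp (tendsto_atTop_add_const_right _ k tendsto_id)

theorem limitMaps_subset_ellisSemigroup : limitMaps α ⊆ ellisSemigroup α := fun _ hf =>
  isClosed_closure.mem_of_mapClusterPt hf <|
    .of_forall fun n => zIter_natCast α n ▸ zIter_mem_ellisSemigroup α n

theorem comp_mem_limitMaps (hf : f ∈ ellisSemigroup α) (hg : g ∈ limitMaps α) :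
    f ∘ g ∈ limitMaps α := by
  refine closure_minimal ?_ ((isClosed_limitMaps α).preimage (Pi.continuous_precomp g)) hf
  rintro _ ⟨n, rfl⟩
  exact zIter_comp_mem_limitMaps n hg

theorem isLeftIdealIn_limitMaps [CompactSpace X] (α : X ≃ₜ X) :
    IsLeftIdealIn (ellisSemigroup α) (limitMaps α) :=
  ⟨limitMaps_nonempty α, limitMaps_subset_ellisSemigroup, fun _ hf _ => comp_mem_limitMaps hf⟩

theorem mem_range_or_mapClusterPt_cofinite {ι Y : Type*} [TopologicalSpace Y] [T1Space Y]
    {u : ι → Y} {y : Y} (hy : y ∈ closure (range u)) :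
    y ∈ range u ∨ MapClusterPt y cofinite u := by
  rw [mem_closure_iff_clusterPt, ← image_univ, ← map_principal, principal_univ] at hy
  obtain ⟨U, -, hU⟩ := mapClusterPt_iff_ultrafilter.1 hy
  rcases U.le_cofinite_or_eq_pure with hcofinite | ⟨i, rfl⟩
  · exact .inr (mapClusterPt_iff_ultrafilter.2 ⟨U, hcofinite, hU⟩)
  · exact .inl ⟨i, pure_le_nhds_iff.1 hU⟩

theorem mem_ellisSemigroup_cases [T1Space X] (hf : f ∈ ellisSemigroup α) :
    (∃ n, f = zIter α n) ∨ f ∈ limitMaps α ∪ limitMaps α.symm := by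
  have hrange : {h : X → X | ∃ n : ℤ, h = zIter α n} = range (zIter α) := by
    simp only [range, eq_comm]
  rw [ellisSemigroup, hrange] at hf
  refine (mem_range_or_mapClusterPt_cofinite hf).imp (fun ⟨n, hn⟩ => ⟨n, hn.symm⟩) fun h => ?_
  rw [Int.cofinite_eq, mapClusterPt_def, map_sup, clusterPt_sup] at h
  exact h.symm.imp mem_limitMaps_iff_zIter.2 mem_limitMaps_symm_iff_zIter.2

theorem isIdealIn_limitMaps_union [CompactSpace X] [T1Space X] (α : X ≃ₜ X) :
    IsIdealIn (ellisSemigroup α) (limitMaps α ∪ limitMaps α.symm) := by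
  obtain ⟨hne, hsub, hleft⟩ := isLeftIdealIn_limitMaps α
  obtain ⟨-, hsub', hleft'⟩ := ellisSemigroup_symm α ▸ isLeftIdealIn_limitMaps α.symm
  have hK : limitMaps α ∪ limitMaps α.symm ⊆ ellisSemigroup α := union_subset hsub hsub'
  have hK_left : ∀ f ∈ ellisSemigroup α, ∀ g ∈ limitMaps α ∪ limitMaps α.symm,
      f ∘ g ∈ limitMaps α ∪ limitMaps α.symm :=
    fun f hf g hg => hg.imp (hleft f hf g) (hleft' f hf g)
  refine ⟨hne.inl, hK, fun f hf g hg => ⟨hK_left f hf g hg, ?_⟩⟩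
  rcases mem_ellisSemigroup_cases hf with ⟨n, rfl⟩ | hf_lim
  · refine hg.imp (comp_zIter_mem_limitMaps n) fun hg_bwd => ?_
    simpa only [zIter_symm, neg_neg] using comp_zIter_mem_limitMaps (-n) hg_bwd
  · exact hK_left g (hK hg) f hf_lim

theorem isNearlySimple_ellisSemigroup [CompactSpace X] [T2Space X]
    (hker : HasCommonKernel (limitMaps α)) (hker_symm : HasCommonKernel (limitMaps α.symm)) :
    IsNearlySimple (ellisSemigroup α) := by
  refine isNearlySimple_of_least_ideal (isIdealIn_limitMaps_union α)
    (fun I hI => union_subset ?_ ?_) fun f hf hf_lim => ?_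
  · exact (isLeftIdealIn_limitMaps α).subset_of_isIdealIn
      (isClosed_limitMaps α).isCompact hker hI
  · exact (isLeftIdealIn_limitMaps α.symm).subset_of_isIdealIn
      (isClosed_limitMaps α.symm).isCompact hker_symm (ellisSemigroup_symm α ▸ hI)
  · obtain ⟨n, rfl⟩ := (mem_ellisSemigroup_cases hf).resolve_right hf_lim
    exact ⟨zIter α (-n), zIter_mem_ellisSemigroup α (-n), zIter_comp_zIter_neg α n,
      by simpa only [neg_neg] using zIter_comp_zIter_neg α (-n)⟩

end LimitMaps

section AlmostDistal

variable {X : Type*}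

/-- `x` and `y` are forward proximal under `β`. Backward proximality under a homeomorphism `α` is
`IsProximalPair α.symm`. -/
def IsProximalPair [UniformSpace X] (β : X → X) (x y : X) : Prop :=
  ∀ V ∈ 𝓤 X, ∃ n : ℕ, (β^[n] x, β^[n] y) ∈ V

/-- `x` and `y` are forward asymptotic under `β`. -/
def IsAsymptoticPair [UniformSpace X] (β : X → X) (x y : X) : Prop :=
  Tendsto (fun n : ℕ => (β^[n] x, β^[n] y)) atTop (𝓤 X)

/-- The forward half of almost distality. A homeomorphism `α` generates an almost distal
`ℤ`-action when both `α` and `α.symm` have this property. -/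
def IsForwardAlmostDistal [UniformSpace X] (β : X → X) : Prop :=
  ∀ x y, IsProximalPair β x y → IsAsymptoticPair β x y

theorem isForwardAlmostDistal_iff_dist [PseudoMetricSpace X] {β : X → X} :
    IsForwardAlmostDistal β ↔ ∀ x y : X, (∀ ε > 0, ∃ n : ℕ, dist (β^[n] x) (β^[n] y) < ε) →
      Tendsto (fun n : ℕ => dist (β^[n] x) (β^[n] y)) atTop (𝓝 0) := by
  refine forall₂_congr fun x y => imp_congr ?_ tendsto_uniformity_iff_dist_tendsto_zero
  exact Metric.uniformity_basis_dist.forall_iff fun _ _ hVW ⟨n, hn⟩ => ⟨n, hVW hn⟩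

variable [UniformSpace X] {β : X → X}

theorem mapClusterPt_iterate_prodMk {f : X → X} (hf : f ∈ limitMaps β) (x y : X) :
    MapClusterPt (f x, f y) atTop fun n : ℕ => (β^[n] x, β^[n] y) :=
  hf.continuousAt_comp (f := fun h : X → X => (h x, h y)) (by fun_prop)

theorem isProximalPair_of_mem_limitMaps {p : X → X} (hp : p ∈ limitMaps β) {x y : X}
    (hxy : p x = p y) : IsProximalPair β x y := fun V hV => by
  have hV_nhds : V ∈ 𝓝 (p x, p y) := hxy ▸ nhds_le_uniformity (p x) hV
  exact ((mapClusterPt_iterate_prodMk hp x y).frequently hV_nhds).exists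

theorem IsAsymptoticPair.eq_of_mem_limitMaps [T0Space X] {x y : X} (hxy : IsAsymptoticPair β x y)
    {q : X → X} (hq : q ∈ limitMaps β) : q x = q y :=
  eq_of_clusterPt_uniformity ((mapClusterPt_iterate_prodMk hq x y).clusterPt.mono hxy)

theorem IsForwardAlmostDistal.hasCommonKernel_limitMaps [T0Space X]
    (hβ : IsForwardAlmostDistal β) : HasCommonKernel (limitMaps β) :=
  fun _ hp _ hq x y hxy =>
    (hβ x y (isProximalPair_of_mem_limitMaps hp hxy)).eq_of_mem_limitMaps hq

end AlmostDistal

theorem stmt_16_general {X : Type*} [UniformSpace X] [T2Space X] [CompactSpace X] (α : X ≃ₜ X)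
    (hfwd : IsForwardAlmostDistal α) (hbwd : IsForwardAlmostDistal α.symm) :
    IsNearlySimple (ellisSemigroup α) :=
  isNearlySimple_ellisSemigroup hfwd.hasCommonKernel_limitMaps hbwd.hasCommonKernel_limitMaps

/-- If a homeomorphism `α` of a compact metric space generates an almost
distal `ℤ`-action (forward proximal implies forward asymptotic, backward proximal implies
backward asymptotic), then `E = closure {α^n : n ∈ ℤ}` is nearly simple: it has a unique
minimal two-sided ideal, which contains all elements with no compositional inverse in `E`. -/
theorem stmt_16 {X : Type*} [MetricSpace X] [CompactSpace X] (α : X ≃ₜ X)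
    (hADfwd : ∀ x y : X,
      (∀ ε > 0, ∃ n : ℕ, dist ((⇑α)^[n] x) ((⇑α)^[n] y) < ε) →
      Filter.Tendsto (fun n : ℕ => dist ((⇑α)^[n] x) ((⇑α)^[n] y))
        Filter.atTop (nhds 0))
    (hADbwd : ∀ x y : X,
      (∀ ε > 0, ∃ n : ℕ, dist ((⇑α.symm)^[n] x) ((⇑α.symm)^[n] y) < ε) →
      Filter.Tendsto (fun n : ℕ => dist ((⇑α.symm)^[n] x) ((⇑α.symm)^[n] y))
        Filter.atTop (nhds 0)) :
    ∃ K : Set (X → X),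
      IsIdealIn (closure {h : X → X | ∃ n : ℤ, h = zIter α n}) K ∧
      (∀ I : Set (X → X),
        IsIdealIn (closure {h : X → X | ∃ n : ℤ, h = zIter α n}) I → I ⊆ K → I = K) ∧
      (∀ I : Set (X → X),
        IsIdealIn (closure {h : X → X | ∃ n : ℤ, h = zIter α n}) I →
        (∀ J : Set (X → X),
          IsIdealIn (closure {h : X → X | ∃ n : ℤ, h = zIter α n}) J → J ⊆ I → J = I) →
        I = K) ∧
      (∀ f ∈ closure {h : X → X | ∃ n : ℤ, h = zIter α n},
        (¬∃ g ∈ closure {h : X → X | ∃ n : ℤ, h = zIter α n},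
          f ∘ g = id ∧ g ∘ f = id) → f ∈ K) :=
  stmt_16_general α (isForwardAlmostDistal_iff_dist.2 hADfwd)
    (isForwardAlmostDistal_iff_dist.2 hADbwd)
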